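/- arXiv:2601.18370 — 2 statements merged into one kernel-verified Lean document; each statement's English description precedes it below -/
import Mathlib

section
/- Let p be a prime, e ≥ 1, q = p^e, r ≥ 2, and let A be any finite abelian group of order q^{r+1}(q^{r−1}−1)/(q−1) containing a subgroup isomorphic to the elementary abelian group (ZMod p)^{e·r} (an elementary abelian subgroup of order q^r). Then there exists a reversible identity-free subset D' of the generalized dihedral group G = Dih(A) such that the Cayley graph Cay(G, D') is a divisible design graph with parameters v = 2q^{r+1}(q^{r−1}−1)/(q−1), k = q^{r−1}(q(q+1)(q^{r−1}−1)/(q−1) − 1), λ1 = q^{r−1}(q^r + q^{r−1} + q − 1 + 2(q^{r−1}−q^2)/(q−1)), λ2 = 2q^{r−2}((q^{r+1}−q^2)/(q−1) − 1), m = 2, n = q^{r+1}(q^{r−1}−1)/(q−1), the canonical partition being into the two cosets of A in G; the graph is proper whenever (q,r) ≠ (2,2). -/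
open Classical

theorem aux_fiber {F V W : Type*} [Field F] [AddCommGroup V] [Module F V] [AddCommGroup W]
    [Module F W] [Finite V] (f : V →ₗ[F] W) (hf : Function.Surjective f) (w : W) :
    Nat.card {v : V // f v = w} * Nat.card W = Nat.card V := by
  obtain ⟨v0, rfl⟩ := hf w
  have e : {v : V // f v = f v0} ≃ f.ker :=
    { toFun := fun v => ⟨v.1 - v0, by simp [v.2]⟩
      invFun := fun k => ⟨k.1 + v0, by simp⟩
      left_inv := fun v => by simp
      right_inv := fun v => by simp }
  rw [Nat.card_congr e, Submodule.card_eq_card_quotient_mul_card f.ker,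
    Nat.card_congr (f.quotKerEquivOfSurjective hf).toEquiv]

theorem aux_pair_surj {F V : Type*} [Field F] [AddCommGroup V] [Module F V]
    (f g : Module.Dual F V) (h : LinearIndependent F ![f, g]) :
    Function.Surjective (f.prod g) := by
  rw [← LinearMap.range_eq_top]
  by_contra hne
  obtain ⟨φ, hφ, hle⟩ := Submodule.exists_le_ker_of_lt_top _ (lt_top_iff_ne_top.2 hne)
  rw [LinearIndependent.pair_iff] at h
  have key : ∀ x y, φ (x, y) = x * φ (1, 0) + y * φ (0, 1) := by
    intro x y
    have : ((x, y) : F × F) = x • (1, 0) + y • (0, 1) := by simp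
    rw [this, map_add, map_smul, map_smul]; simp
  have h0 := h (φ (1, 0)) (φ (0, 1)) (by
    ext v
    have : (f v, g v) ∈ LinearMap.ker φ := hle ⟨v, rfl⟩
    rw [LinearMap.mem_ker, key] at this
    simp; linear_combination this)
  apply hφ
  apply LinearMap.ext
  rintro ⟨x, y⟩
  rw [key, h0.1, h0.2]; simp

theorem aux_single_surj {F V : Type*} [Field F] [AddCommGroup V] [Module F V]
    (f : Module.Dual F V) (h : f ≠ 0) : Function.Surjective f :=
  LinearMap.surjective h

open scoped LinearAlgebra.Projectivization in
theorem aux_inc {F V : Type*} [Field F] [Finite F] [AddCommGroup V] [Module F V] [Finite V]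
    (v : V) (hv : v ≠ 0) :
    (Nat.card {i : ℙ F (Module.Dual F V) // i.rep v = 0} * (Nat.card F - 1) + 1) * Nat.card F =
      Nat.card (Module.Dual F V) := by
  have : Finite (Module.Dual F V) := Finite.of_injective (fun f => (f : V → F)) DFunLike.coe_injective
  have hs : Function.Surjective (Module.Dual.eval F V v) := by
    apply LinearMap.surjective
    intro h
    exact hv ((Module.forall_dual_apply_eq_zero_iff F v).1 (fun φ => by
      simpa using LinearMap.congr_fun h φ))
  rw [← aux_fiber _ hs 0]
  congr 1
  let m : {i : ℙ F (Module.Dual F V) // i.rep v = 0} × Fˣ →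
      {φ : {φ : Module.Dual F V // Module.Dual.eval F V v φ = 0} // φ ≠ ⟨0, by simp⟩} := fun x =>
    ⟨⟨x.2 • x.1.1.rep, by simp [x.1.2]⟩, by
      intro h
      have := congrArg Subtype.val h
      exact x.1.1.rep_nonzero ((smul_eq_zero_iff_eq x.2).1 this)⟩
  have hm : Function.Bijective m := by
    constructor
    · rintro ⟨⟨i, hi⟩, u⟩ ⟨⟨j, hj⟩, w⟩ h
      have h1 : u • i.rep = w • j.rep := congrArg (fun z => z.1.1) h
      have hij : i = j := by
        rw [← i.mk_rep, ← j.mk_rep, Projectivization.mk_eq_mk_iff]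
        refine ⟨u⁻¹ * w, ?_⟩
        rw [mul_smul, ← h1, inv_smul_smul]
      subst hij
      have : (u : F) = w := smul_left_injective F i.rep_nonzero h1
      have : u = w := Units.ext this
      simp [this]
    · rintro ⟨⟨φ, h0⟩, h1⟩
      have hφ : φ ≠ 0 := fun h => h1 (by simp [h])
      obtain ⟨a, ha⟩ := Projectivization.exists_smul_eq_mk_rep F φ hφ
      refine ⟨⟨⟨Projectivization.mk F φ hφ, ?_⟩, a⁻¹⟩, ?_⟩
      · rw [← ha]
        simp at h0
        simp [h0]
      · apply Subtype.ext; apply Subtype.ext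
        simp only [m]
        rw [← ha, inv_smul_smul]
  have h2 := Nat.card_congr (Equiv.ofBijective m hm)
  rw [Nat.card_prod, Nat.card_units] at h2
  rw [h2]
  have := Fintype.ofFinite {φ : Module.Dual F V // Module.Dual.eval F V v φ = 0}
  rw [Nat.card_eq_fintype_card, Nat.card_eq_fintype_card]
  simp only [ne_eq]
  rw [Fintype.card_subtype_compl, Fintype.card_subtype_eq]
  have : 0 < Fintype.card {φ : Module.Dual F V // Module.Dual.eval F V v φ = 0} :=
    Fintype.card_pos_iff.2 ⟨⟨0, by simp⟩⟩
  omega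

theorem aux_equiv (p e r : ℕ) [Fact p.Prime] (he : 1 ≤ e) :
    Nonempty ((Fin r → GaloisField p e) ≃+ (Fin (e * r) → ZMod p)) := by
  have : Module.finrank (ZMod p) (Fin r → GaloisField p e) =
      Module.finrank (ZMod p) (Fin (e * r) → ZMod p) := by
    rw [Module.finrank_pi_fintype]
    simp [GaloisField.finrank p (show e ≠ 0 by omega), mul_comm]
  exact ⟨(LinearEquiv.ofFinrankEq _ _ this).toAddEquiv⟩

open scoped LinearAlgebra.Projectivization in
theorem aux_family0 (q s N : ℕ) (hq2 : 2 ≤ q)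
    (hN : N * (q - 1) + 1 = q ^ (s + 1))
    {F V : Type} [Field F] [Finite F] [AddCommGroup V] [Module F V] [Finite V]
    (hcF : Nat.card F = q) (hr : Module.finrank F V = s + 2)
    {A : Type*} [CommGroup A] [Finite A] (H : Subgroup A)
    (E : H ≃* Multiplicative V) :
    Nat.card H = q ^ (s + 2) ∧
    ∃ (I : Type) (_ : Fintype I) (K : I → Subgroup A),
      (∀ i, K i ≤ H) ∧ Nat.card I = q * N + 1 ∧ (∀ i, Nat.card (K i) = q ^ (s + 1)) ∧
      (∀ i j, i ≠ j → ∀ h ∈ H, Nat.card {u : A // u ∈ K i ∧ u * h ∈ K j} = q ^ s) ∧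
      (∀ a ∈ H, a ≠ 1 → Nat.card {i // a ∈ K i} = N) := by
  have hcV : Nat.card V = q ^ (s + 2) := by
    rw [Module.natCard_eq_pow_finrank (K := F), hcF, hr]
  have hcD : Nat.card (Module.Dual F V) = q ^ (s + 2) := by
    rw [Module.natCard_eq_pow_finrank (K := F), hcF, Subspace.dual_finrank_eq, hr]
  have hfin : Finite (Module.Dual F V) :=
    Finite.of_injective (fun f => (f : V → F)) DFunLike.coe_injective
  obtain ⟨ε, hε⟩ : ∃ ε : H ≃ V, ∀ x y, ε (x * y) = ε x + ε y :=
    ⟨E.toEquiv.trans Multiplicative.toAdd, fun x y => by simp⟩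
  have hε1 : ε 1 = 0 := by
    have := hε 1 1
    simpa using this
  have hεi : ∀ x, ε x⁻¹ = - ε x := by
    intro x
    have := hε x x⁻¹
    rw [mul_inv_cancel, hε1] at this
    exact (neg_eq_of_add_eq_zero_right this.symm).symm
  refine ⟨by rw [Nat.card_congr ε, hcV], ℙ F (Module.Dual F V), Fintype.ofFinite _, fun i =>
    { carrier := {a | ∃ h : a ∈ H, i.rep (ε ⟨a, h⟩) = 0}
      mul_mem' := ?_
      one_mem' := ?_
      inv_mem' := ?_ }, ?_, ?_, ?_, ?_, ?_⟩
  · rintro a b ⟨ha, ha'⟩ ⟨hb, hb'⟩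
    refine ⟨H.mul_mem ha hb, ?_⟩
    have := hε ⟨a, ha⟩ ⟨b, hb⟩
    change ε ⟨a * b, _⟩ = _ at this
    rw [this, map_add, ha', hb', add_zero]
  · refine ⟨H.one_mem, ?_⟩
    change i.rep (ε 1) = 0
    rw [hε1, map_zero]
  · rintro a ⟨ha, ha'⟩
    refine ⟨H.inv_mem ha, ?_⟩
    have := hεi ⟨a, ha⟩
    change ε ⟨a⁻¹, _⟩ = _ at this
    rw [this, map_neg, ha', neg_zero]
  · rintro i a ⟨ha, _⟩
    exact ha
  · have h1 := Projectivization.card' F (Module.Dual F V)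
    rw [hcD, hcF] at h1
    obtain ⟨t, rfl⟩ : ∃ t, q = t + 1 := ⟨q - 1, by omega⟩
    simp only [Nat.add_sub_cancel] at *
    rw [pow_succ, ← hN] at h1
    have ht : 0 < t := by omega
    apply Nat.eq_of_mul_eq_mul_right ht
    linarith
  · intro i
    have h1 := aux_fiber i.rep (LinearMap.surjective i.rep_nonzero) 0
    rw [hcF, hcV, pow_succ] at h1
    rw [← Nat.eq_of_mul_eq_mul_right (by omega) h1]
    refine Nat.card_congr ?_
    exact
    { toFun := fun a => ⟨ε ⟨a.1, a.2.1⟩, a.2.2⟩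
      invFun := fun v => ⟨(ε.symm v.1).1, (ε.symm v.1).2, by simpa using v.2⟩
      left_inv := fun a => by simp
      right_inv := fun v => by simp }
  · intro i j hij h hh
    have hli : LinearIndependent F ![i.rep, j.rep] := by
      have := (Projectivization.independent_pair_iff_ne i j).2 hij
      rw [Projectivization.independent_iff] at this
      have heq : Projectivization.rep ∘ ![i, j] = ![i.rep, j.rep] := by
        ext k : 1
        fin_cases k <;> rfl
      rw [heq] at this
      exact this
    have h1 := aux_fiber _ (aux_pair_surj _ _ hli) (0, - j.rep (ε ⟨h, hh⟩))
    rw [Nat.card_prod, hcF, hcV, pow_add, pow_two] at h1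
    rw [← Nat.eq_of_mul_eq_mul_right (by positivity) h1]
    have key : ∀ x : H, ε (x * ⟨h, hh⟩) = ε x + ε ⟨h, hh⟩ := fun x => hε _ _
    refine Nat.card_congr ?_
    exact
    { toFun := fun a => ⟨ε ⟨a.1, a.2.1.1⟩, by
        obtain ⟨a, ⟨h1, h2⟩, ⟨h3, h4⟩⟩ := a
        have h5 := key ⟨a, h1⟩
        change ε ⟨a * h, _⟩ = _ at h5
        rw [h5, map_add] at h4
        exact Prod.ext h2 (eq_neg_of_add_eq_zero_left h4)⟩
      invFun := fun v => ⟨(ε.symm v.1).1, by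
        obtain ⟨v, hv⟩ := v
        have hv := Prod.ext_iff.1 hv
        simp only [LinearMap.prod_apply] at hv
        change i.rep v = 0 ∧ j.rep v = _ at hv
        refine ⟨⟨(ε.symm v).2, by simpa using hv.1⟩, H.mul_mem (ε.symm v).2 hh, ?_⟩
        have h5 := key (ε.symm v)
        change ε ⟨(ε.symm v).1 * h, _⟩ = _ at h5
        rw [h5, map_add, Equiv.apply_symm_apply, hv.2, neg_add_cancel]⟩
      left_inv := fun a => by simp
      right_inv := fun v => by simp }
  · intro a ha ha1
    have hv : ε ⟨a, ha⟩ ≠ 0 := by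
      rw [← hε1]
      intro h
      exact ha1 (congrArg Subtype.val (ε.injective h))
    have h1 := aux_inc (F := F) _ hv
    rw [hcF, hcD, pow_succ] at h1
    have h2 := Nat.eq_of_mul_eq_mul_right (by omega) h1
    rw [← hN] at h2
    have h3 := Nat.eq_of_mul_eq_mul_right (by omega) (Nat.add_right_cancel h2)
    rw [← h3]
    refine Nat.card_congr (Equiv.subtypeEquivRight fun i => ?_)
    exact ⟨fun h => h.2, fun h => ⟨ha, h⟩⟩

theorem aux_family (p e q s N : ℕ) (hp : p.Prime) (he : 1 ≤ e) (hq : q = p ^ e)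
    (hN : N * (q - 1) + 1 = q ^ (s + 1))
    {A : Type*} [CommGroup A] [Finite A] (H : Subgroup A)
    (E : H ≃* Multiplicative (Fin (e * (s + 2)) → ZMod p)) :
    Nat.card H = q ^ (s + 2) ∧
    ∃ (I : Type) (_ : Fintype I) (K : I → Subgroup A),
      (∀ i, K i ≤ H) ∧ Nat.card I = q * N + 1 ∧ (∀ i, Nat.card (K i) = q ^ (s + 1)) ∧
      (∀ i j, i ≠ j → ∀ h ∈ H, Nat.card {u : A // u ∈ K i ∧ u * h ∈ K j} = q ^ s) ∧
      (∀ a ∈ H, a ≠ 1 → Nat.card {i // a ∈ K i} = N) := by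
  have : Fact p.Prime := ⟨hp⟩
  obtain ⟨T⟩ := aux_equiv p e (s + 2) he
  have hcF : Nat.card (GaloisField p e) = q := by rw [hq, GaloisField.card p e (by omega)]
  have hq2 : 2 ≤ q := by
    rw [hq]
    exact le_trans hp.two_le (Nat.le_self_pow (by omega) p)
  exact aux_family0 (F := GaloisField p e) (V := Fin (s + 2) → GaloisField p e) q s N hq2 hN hcF
    (by simp) H (E.trans T.symm.toMultiplicative)

theorem aux_sum {A Q : Type*} [Finite A] [Fintype Q] (π : A → Q) (P : A → Prop) :
    Nat.card {x // P x} = ∑ c, Nat.card {x // π x = c ∧ P x} := by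
  have := Fintype.ofFinite A
  simp only [Nat.card_eq_fintype_card, Fintype.card_subtype]
  rw [Finset.card_eq_sum_card_fiberwise (f := π) (t := Finset.univ) (by simp)]
  refine Finset.sum_congr rfl fun c _ => ?_
  congr 1
  ext x
  simp [and_comm]

theorem aux_A {A : Type*} [CommGroup A] [Finite A] (q s N : ℕ) (hq : 2 ≤ q)
    (hA : Nat.card A = q ^ (s + 3) * N)
    (H : Subgroup A) (hH : Nat.card H = q ^ (s + 2))
    (I : Type) [Fintype I] (K : I → Subgroup A)
    (hKH : ∀ i, K i ≤ H) (hI : Nat.card I = q * N + 1)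
    (hK : ∀ i, Nat.card (K i) = q ^ (s + 1))
    (hKK : ∀ i j, i ≠ j → ∀ h ∈ H, Nat.card {u : A // u ∈ K i ∧ u * h ∈ K j} = q ^ s)
    (hN : ∀ a ∈ H, a ≠ 1 → Nat.card {i // a ∈ K i} = N) :
    ∃ (K0 : Subgroup A) (D : Set A), Nat.card K0 = q ^ (s + 1) ∧
      Nat.card D = q * N * q ^ (s + 1) ∧
      (∀ c, Nat.card {x // x ∈ K0 ∧ x * c ∈ D} = q ^ s) ∧
      ∀ a, a ≠ 1 → Nat.card {x // x ∈ D ∧ x * a ∈ D} + (if a ∈ K0 then q ^ (s + 1) else 0)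
        = q ^ (s + 1) * N := by
  have hcQ : Nat.card (A ⧸ H) = q * N := by
    have := Subgroup.card_eq_card_quotient_mul_card_subgroup H
    rw [hA, hH] at this
    refine Nat.eq_of_mul_eq_mul_right (show 0 < q ^ (s + 2) by positivity) ?_
    rw [← this]; ring
  have hne : Nonempty I := by
    rw [← not_isEmpty_iff]
    intro h
    simp at hI
  obtain ⟨i0⟩ := hne
  have hfQ := Fintype.ofFinite (A ⧸ H)
  have hcI : Nat.card {i // i ≠ i0} = q * N := by
    rw [Nat.card_eq_fintype_card] at hI ⊢
    simp only [ne_eq]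
    rw [Fintype.card_subtype_compl, Fintype.card_subtype_eq, hI]
    simp
  have σ : (A ⧸ H) ≃ {i // i ≠ i0} := Fintype.equivOfCardEq (by
    rw [← Nat.card_eq_fintype_card, ← Nat.card_eq_fintype_card, hcQ, hcI])
  obtain ⟨g, hg⟩ : ∃ g : A ⧸ H → A, ∀ c, (QuotientGroup.mk (g c) : A ⧸ H) = c :=
    ⟨Quotient.out, fun c => QuotientGroup.out_eq' c⟩
  let π : A → A ⧸ H := QuotientGroup.mk
  have hπ : ∀ x y, π (x * y) = π x * π y := fun _ _ => rfl
  have hπ1 : ∀ x, π x = 1 ↔ x ∈ H := fun x => QuotientGroup.eq_one_iff x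
  have hg' : ∀ c, π (g c) = c := hg
  have hπg : ∀ x c, π x = c ↔ (g c)⁻¹ * x ∈ H := by
    intro x c
    rw [← QuotientGroup.eq, hg]
    exact eq_comm
  let D : Set A := {a | (g (π a))⁻¹ * a ∈ K (σ (π a))}
  have hD : ∀ a c, π a = c → (a ∈ D ↔ (g c)⁻¹ * a ∈ K (σ c)) := by
    rintro a c rfl
    rfl
  have hD2 : ∀ a c, (π a = c ∧ a ∈ D) ↔ (g c)⁻¹ * a ∈ K (σ c) := by
    intro a c
    constructor
    · rintro ⟨h1, h2⟩
      exact (hD a c h1).1 h2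
    · intro h
      have h1 := (hπg a c).2 (hKH _ h)
      exact ⟨h1, (hD a c h1).2 h⟩
  refine ⟨K i0, D, hK i0, ?_, ?_, ?_⟩
  · change Nat.card {x // x ∈ D} = _
    rw [aux_sum π]
    have : ∀ c, Nat.card {x // π x = c ∧ x ∈ D} = q ^ (s + 1) := by
      intro c
      rw [← hK (σ c)]
      refine Nat.card_congr ((Equiv.mulLeft (g c)⁻¹).subtypeEquiv fun x => ?_)
      rw [hD2]; rfl
    simp only [this]
    rw [Finset.sum_const, Finset.card_univ, ← Nat.card_eq_fintype_card, hcQ, smul_eq_mul]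
  · intro c
    rw [← hKK i0 (σ (π c)) (σ (π c)).2.symm ((g (π c))⁻¹ * c) ((hπg _ _).1 rfl)]
    refine Nat.card_congr (Equiv.subtypeEquivRight fun x => and_congr_right fun hx => ?_)
    rw [hD (x * c) (π c) (by rw [hπ, (hπ1 x).2 (hKH _ hx), one_mul]), mul_left_comm]
  · intro a ha
    have hc : ∀ c, Nat.card {x // π x = c ∧ (x ∈ D ∧ x * a ∈ D)} =
        Nat.card {u // u ∈ K (σ c) ∧ u * ((g (c * π a))⁻¹ * (g c * a)) ∈ K (σ (c * π a))} := by
      intro c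
      refine Nat.card_congr ((Equiv.mulLeft (g c)⁻¹).subtypeEquiv fun x => ?_)
      rw [← and_assoc, hD2]
      refine and_congr_right fun hx => ?_
      have h1 : π x = c := ((hD2 x c).2 hx).1
      rw [hD (x * a) (c * π a) (by rw [hπ, h1])]
      have : (g (c * π a))⁻¹ * (x * a) = (g c)⁻¹ * x * ((g (c * π a))⁻¹ * (g c * a)) := by
        have h2 : x = g c * ((g c)⁻¹ * x) := by group
        generalize (g c)⁻¹ * x = u at h2
        subst h2
        rw [mul_comm u, mul_assoc, mul_assoc, mul_assoc, mul_comm u]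
      rw [this]; rfl
    rw [aux_sum π]
    simp only [hc]
    by_cases haH : a ∈ H
    · have h1 : π a = 1 := (hπ1 a).2 haH
      have hterm : ∀ i, Nat.card {u // u ∈ K i ∧ u * a ∈ K i} =
          if a ∈ K i then q ^ (s + 1) else 0 := by
        intro i
        split_ifs with h
        · rw [← hK i]
          refine Nat.card_congr (Equiv.subtypeEquivRight fun x => ?_)
          constructor
          · exact fun h => h.1
          · exact fun h' => ⟨h', (K i).mul_mem h' h⟩
        · rw [Nat.card_eq_zero]
          left
          constructor
          rintro ⟨u, hu, hu'⟩
          exact h (((K i).mul_mem_cancel_left hu).1 hu')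
      simp only [h1, mul_one, inv_mul_cancel_left, hterm]
      rw [σ.sum_comp (fun i : {i // i ≠ i0} => if a ∈ K i then q ^ (s + 1) else 0)]
      have h2 := Fintype.sum_eq_add_sum_subtype_ne (fun i => if a ∈ K i then q ^ (s + 1) else 0) i0
      rw [add_comm, ← h2, ← hN a haH ha, ← Finset.sum_filter, Finset.sum_const, smul_eq_mul,
        Nat.card_eq_fintype_card, Fintype.card_subtype, mul_comm]
    · have hterm : ∀ c, Nat.card {u // u ∈ K (σ c) ∧
          u * ((g (c * π a))⁻¹ * (g c * a)) ∈ K (σ (c * π a))} = q ^ s := by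
        intro c
        apply hKK
        · intro h
          have := σ.injective (Subtype.ext h)
          exact haH ((hπ1 a).1 (by simpa using this))
        · rw [← hπg, hπ, hg']
      simp only [hterm]
      rw [Finset.sum_const, Finset.card_univ, ← Nat.card_eq_fintype_card, hcQ, smul_eq_mul,
        if_neg (fun h => haH (hKH _ h))]
      ring

theorem aux_split {A : Type*} [Finite A] (P Q : A → Prop) :
    Nat.card {x // ¬ P x ∧ Q x} + Nat.card {x // P x ∧ Q x} = Nat.card {x // Q x} := by
  have := Fintype.ofFinite A
  simp only [Nat.card_eq_fintype_card, Fintype.card_subtype]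
  rw [← Finset.card_filter_add_card_filter_not (s := Finset.univ.filter Q) (fun x => P x),
    Finset.filter_filter, Finset.filter_filter, add_comm]
  simp only [and_comm]

theorem aux_cards {A : Type*} [CommGroup A] [Finite A] (K0 : Subgroup A) (D : Set A) :
    (Nat.card {x // x ∉ K0} + Nat.card K0 = Nat.card A) ∧
    (∀ c, Nat.card {x // x ∉ K0 ∧ x * c ∈ D} + Nat.card {x // x ∈ K0 ∧ x * c ∈ D} = Nat.card D) ∧
    (∀ c, Nat.card {x // x ∉ K0 ∧ x * c ∉ K0} + 2 * Nat.card K0 =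
      Nat.card A + if c ∈ K0 then Nat.card K0 else 0) := by
  have h1 : Nat.card {x // x ∉ K0} + Nat.card K0 = Nat.card A := by
    have := aux_split (fun x => x ∈ K0) (fun _ => True)
    simp only [and_true] at this
    rw [Nat.card_congr (Equiv.subtypeUnivEquiv (fun _ => trivial))] at this
    exact this
  refine ⟨h1, fun c => ?_, fun c => ?_⟩
  · rw [aux_split (fun x => x ∈ K0) (fun x => x * c ∈ D)]
    exact Nat.card_congr ((Equiv.mulRight c).subtypeEquiv fun x => Iff.rfl)
  · have h2 := aux_split (fun x => x ∈ K0) (fun x => x * c ∉ K0)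
    have h3 : Nat.card {x // x * c ∉ K0} = Nat.card {x // x ∉ K0} :=
      Nat.card_congr ((Equiv.mulRight c).subtypeEquiv fun x => Iff.rfl)
    have h4 := aux_split (fun x => x * c ∈ K0) (fun x => x ∈ K0)
    have h5 : Nat.card {x // x * c ∈ K0 ∧ x ∈ K0} = if c ∈ K0 then Nat.card K0 else 0 := by
      split_ifs with h
      · refine Nat.card_congr (Equiv.subtypeEquivRight fun x => ?_)
        exact ⟨fun h => h.2, fun h' => ⟨K0.mul_mem h' h, h'⟩⟩
      · rw [Nat.card_eq_zero]
        left
        constructor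
        rintro ⟨u, hu, hu'⟩
        exact h ((K0.mul_mem_cancel_left hu').1 hu)
    have h6 : Nat.card {x // x * c ∉ K0 ∧ x ∈ K0} = Nat.card {x // x ∈ K0 ∧ x * c ∉ K0} :=
      Nat.card_congr (Equiv.subtypeEquivRight fun x => and_comm)
    have h7 : Nat.card {x // x ∈ K0} = Nat.card K0 := rfl
    omega

theorem aux_G {A G : Type*} [CommGroup A] [Finite A] [Group G] [Finite G]
    (ι : A →* G) (hinj : Function.Injective ι)
    (b : G) (hb2 : b * b = 1)
    (hbconj : ∀ a : A, b * ι a * b⁻¹ = ι a⁻¹)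
    (hbnot : b ∉ Set.range ι)
    (hdecomp : ∀ g : G, (∃ a, g = ι a) ∨ (∃ a, g = ι a * b))
    (K0 : Subgroup A) (D : Set A) :
    ∃ D' : Set G, D'⁻¹ = D' ∧ (1 : G) ∉ D' ∧
      (∀ g : G, Nat.card {x : G // x * g⁻¹ ∈ Set.range ι} = Nat.card A) ∧
      (∀ g : G, Nat.card {x : G // x * g⁻¹ ∈ D'} = Nat.card {x // x ∉ K0} + Nat.card D) ∧
      (∀ g h : G, g ≠ h → g * h⁻¹ ∈ Set.range ι → ∃ c, c ≠ 1 ∧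
        Nat.card {x : G // x * g⁻¹ ∈ D' ∧ x * h⁻¹ ∈ D'} =
          Nat.card {x // x ∉ K0 ∧ x * c ∉ K0} + Nat.card {x // x ∈ D ∧ x * c ∈ D}) ∧
      (∀ g h : G, g * h⁻¹ ∉ Set.range ι → ∃ c,
        Nat.card {x : G // x * g⁻¹ ∈ D' ∧ x * h⁻¹ ∈ D'} =
          2 * Nat.card {x // x ∉ K0 ∧ x * c ∈ D}) := by
  have hbi : b⁻¹ = b := inv_eq_of_mul_eq_one_left hb2
  have hbc : ∀ a, b * ι a = ι a⁻¹ * b := by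
    intro a
    rw [← hbconj a]; group
  have hne : ∀ a c, ι a ≠ ι c * b := by
    intro a c h
    exact hbnot ⟨c⁻¹ * a, by rw [map_mul, h, map_inv]; group⟩
  let f : A ⊕ A → G := Sum.elim (fun a => ι a) (fun a => ι a * b)
  have hf : Function.Bijective f := by
    constructor
    · rintro (a | a) (c | c) h
      · exact congrArg _ (hinj h)
      · exact absurd h (hne a c)
      · exact absurd h.symm (hne c a)
      · exact congrArg _ (hinj (mul_right_cancel h))
    · intro g
      rcases hdecomp g with ⟨a, rfl⟩ | ⟨a, rfl⟩
      · exact ⟨Sum.inl a, rfl⟩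
      · exact ⟨Sum.inr a, rfl⟩
  have hcount : ∀ P : G → Prop, Nat.card {y // P y} =
      Nat.card {a // P (ι a)} + Nat.card {a // P (ι a * b)} := by
    intro P
    rw [← Nat.card_sum]
    refine Nat.card_congr (Equiv.trans ?_ (Equiv.subtypeSum (p := fun x => P (f x))))
    exact ((Equiv.ofBijective f hf).subtypeEquiv fun x => Iff.rfl).symm
  let D' : Set G := {y | (∃ a, y = ι a ∧ a ∉ K0) ∨ (∃ a, y = ι a * b ∧ a ∈ D)}
  have hD1 : ∀ a, ι a ∈ D' ↔ a ∉ K0 := by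
    intro a
    constructor
    · rintro (⟨c, h, h'⟩ | ⟨c, h, h'⟩)
      · rwa [hinj h]
      · exact absurd h (hne a c)
    · exact fun h => Or.inl ⟨a, rfl, h⟩
  have hD2 : ∀ a, ι a * b ∈ D' ↔ a ∈ D := by
    intro a
    constructor
    · rintro (⟨c, h, h'⟩ | ⟨c, h, h'⟩)
      · exact absurd h.symm (hne c a)
      · rwa [hinj (mul_right_cancel h)]
    · exact fun h => Or.inr ⟨a, rfl, h⟩
  have hshift : ∀ (P : G → Prop) (g : G), Nat.card {x // P (x * g⁻¹)} = Nat.card {x // P x} :=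
    fun P g => Nat.card_congr ((Equiv.mulRight g⁻¹).subtypeEquiv fun x => Iff.rfl)
  have hshift2 : ∀ g h : G, Nat.card {x : G // x * g⁻¹ ∈ D' ∧ x * h⁻¹ ∈ D'} =
      Nat.card {x : G // x ∈ D' ∧ x * (g * h⁻¹) ∈ D'} := by
    intro g h
    rw [← hshift (fun x => x ∈ D' ∧ x * (g * h⁻¹) ∈ D') g]
    simp only [mul_assoc, inv_mul_cancel_left]
  refine ⟨D', ?_, ?_, ?_, ?_, ?_, ?_⟩
  · ext y
    rw [Set.mem_inv]
    rcases hdecomp y with ⟨a, rfl⟩ | ⟨a, rfl⟩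
    · rw [← map_inv, hD1, hD1, inv_mem_iff]
    · rw [mul_inv_rev, hbi, ← map_inv, hbc, inv_inv]
  · rw [← map_one ι, hD1]
    simp [K0.one_mem]
  · intro g
    rw [hshift (fun x => x ∈ Set.range ι)]
    exact (Nat.card_congr (Equiv.ofInjective ι hinj)).symm
  · intro g
    rw [hshift (fun x => x ∈ D'), hcount]
    simp only [hD1, hD2]
  · rintro g h hgh ⟨c, hc⟩
    refine ⟨c, ?_, ?_⟩
    · rintro rfl
      rw [map_one] at hc
      exact hgh (mul_inv_eq_one.1 hc.symm)
    · rw [hshift2, ← hc, hcount]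
      simp only [mul_assoc, hbc]
      simp only [← mul_assoc, ← map_mul, hD1, hD2]
      congr 1
      refine Nat.card_congr ((Equiv.mulRight c⁻¹).subtypeEquiv fun x => ?_)
      simp [and_comm]
  · intro g h hgh
    rcases hdecomp (g * h⁻¹) with ⟨c, hc⟩ | ⟨c, hc⟩
    · exact absurd ⟨c, hc.symm⟩ hgh
    · refine ⟨c, ?_⟩
      rw [hshift2, hc, hcount]
      have h1 : ∀ x, ι x * b * (ι c * b) = ι (x * c⁻¹) := by
        intro x
        rw [mul_assoc, ← mul_assoc b, hbc, mul_assoc _ b b, hb2, mul_one, map_mul]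
      simp only [h1]
      simp only [← mul_assoc, ← map_mul, hD1, hD2]
      rw [two_mul]
      congr 1
      refine Nat.card_congr ((Equiv.mulRight c⁻¹).subtypeEquiv fun x => ?_)
      simp [and_comm]

/-- for `q = p^e` a prime power, `r ≥ 2`, and `A` a finite abelian group
of order `q^(r+1)(q^(r−1)−1)/(q−1)` containing an elementary abelian subgroup of
order `q^r`, the generalized dihedral group `G = Dih(A)` carries a reversible
identity-free subset `D'` such that `Cay(G, D')` is a divisible design graph with
parameters `v = 2q^(r+1)(q^(r−1)−1)/(q−1)`, `k = q^(r−1)(q(q+1)(q^(r−1)−1)/(q−1) − 1)`,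
`λ1 = q^(r−1)(q^r + q^(r−1) + q − 1 + 2(q^(r−1)−q²)/(q−1))`,
`λ2 = 2q^(r−2)((q^(r+1)−q²)/(q−1) − 1)`, `m = 2`, `n = q^(r+1)(q^(r−1)−1)/(q−1)`,
with canonical partition into the two cosets of `A` in `G`; the graph is proper
whenever `(q, r) ≠ (2, 2)`. -/
theorem dihedral_ddg_family_eq1
    (p e q r : ℕ) (hp : p.Prime) (he : 1 ≤ e) (hq : q = p ^ e) (hr : 2 ≤ r)
    (A : Type*) [CommGroup A] [Fintype A] [DecidableEq A]
    (hcardA : (Fintype.card A : ℚ)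
        = (q : ℚ) ^ (r + 1) * ((q : ℚ) ^ (r - 1) - 1) / ((q : ℚ) - 1))
    (hsub : ∃ H : Subgroup A, Nonempty (H ≃* Multiplicative (Fin (e * r) → ZMod p)))
    (G : Type*) [Group G] [Fintype G]
    (ι : A →* G) (hinj : Function.Injective ι)
    (b : G) (hb2 : b * b = 1) (hb1 : b ≠ 1)
    (hbconj : ∀ a : A, b * ι a * b⁻¹ = ι a⁻¹)
    (hbnot : b ∉ Set.range ι)
    (hcardG : Fintype.card G = 2 * Fintype.card A)
    (hdecomp : ∀ g : G, (∃ a, g = ι a) ∨ (∃ a, g = ι a * b)) :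
    ∃ (D' : Set G) (k l1 l2 nn : ℕ),
      D'⁻¹ = D' ∧
      (1 : G) ∉ D' ∧
      (k : ℚ) = (q : ℚ) ^ (r - 1)
          * ((q : ℚ) * ((q : ℚ) + 1) * ((q : ℚ) ^ (r - 1) - 1) / ((q : ℚ) - 1) - 1) ∧
      (l1 : ℚ) = (q : ℚ) ^ (r - 1)
          * ((q : ℚ) ^ r + (q : ℚ) ^ (r - 1) + (q : ℚ) - 1
            + 2 * ((q : ℚ) ^ (r - 1) - (q : ℚ) ^ 2) / ((q : ℚ) - 1)) ∧
      (l2 : ℚ) = 2 * (q : ℚ) ^ (r - 2)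
          * (((q : ℚ) ^ (r + 1) - (q : ℚ) ^ 2) / ((q : ℚ) - 1) - 1) ∧
      (nn : ℚ) = (q : ℚ) ^ (r + 1) * ((q : ℚ) ^ (r - 1) - 1) / ((q : ℚ) - 1) ∧
      Fintype.card G = 2 * nn ∧
      (∀ g : G, Nat.card {x : G // x * g⁻¹ ∈ Set.range ι} = nn) ∧
      (∀ g : G, Nat.card {x : G // x * g⁻¹ ∈ D'} = k) ∧
      (∀ g h : G, g ≠ h →
        Nat.card {x : G // x * g⁻¹ ∈ D' ∧ x * h⁻¹ ∈ D'}
          = if g * h⁻¹ ∈ Set.range ι then l1 else l2) ∧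
      (¬(q = 2 ∧ r = 2) → l1 ≠ l2) := by
  obtain ⟨s, rfl⟩ : ∃ s, r = s + 2 := ⟨r - 2, by omega⟩
  have hq2 : 2 ≤ q := by
    rw [hq]
    exact le_trans hp.two_le (Nat.le_self_pow (by omega) p)
  obtain ⟨N, hN⟩ : ∃ N, N * (q - 1) + 1 = q ^ (s + 1) := by
    obtain ⟨t, rfl⟩ : ∃ t, q = t + 1 := ⟨q - 1, by omega⟩
    exact ⟨_, geom_sum_mul_add t (s + 1)⟩
  have hr1 : s + 2 - 1 = s + 1 := rfl
  have hr2 : s + 2 - 2 = s := rfl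
  rw [hr1] at hcardA ⊢
  rw [hr2]
  have hq0 : (q : ℚ) - 1 ≠ 0 := by
    have : (2 : ℚ) ≤ q := by exact_mod_cast hq2
    intro h
    linarith
  have hNQ : (N : ℚ) * ((q : ℚ) - 1) + 1 = (q : ℚ) ^ (s + 1) := by
    have := congrArg (Nat.cast : ℕ → ℚ) hN
    rw [Nat.cast_add, Nat.cast_mul, Nat.cast_sub (by omega)] at this
    simpa using this
  have hdiv : ((q : ℚ) ^ (s + 1) - 1) / ((q : ℚ) - 1) = N := by
    rw [div_eq_iff hq0]
    linarith
  rw [mul_div_assoc, hdiv] at hcardA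
  have hA : Nat.card A = q ^ (s + 3) * N := by
    rw [Nat.card_eq_fintype_card]
    exact_mod_cast hcardA
  obtain ⟨H, ⟨E⟩⟩ := hsub
  obtain ⟨hH, I, hI, K, hKH, hcI, hK, hKK, hKN⟩ := aux_family p e q s N hp he hq hN H E
  obtain ⟨K0, D, hK0, hcD, hKD, hDD⟩ := aux_A q s N hq2 hA H hH I K hKH hcI hK hKK hKN
  obtain ⟨hc1, hc2, hc3⟩ := aux_cards K0 D
  obtain ⟨D', hinv, hone, hrange, hdeg, hl1, hl2⟩ :=
    aux_G ι hinj b hb2 hbconj hbnot hdecomp K0 D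
  rw [hK0, hA] at hc1
  simp only [hKD, hcD] at hc2
  simp only [hK0, hA] at hc3
  rw [hcD] at hdeg
  rw [hA] at hrange
  have hN1 : 1 ≤ N := by
    rcases Nat.eq_zero_or_pos N with h | h
    · subst h
      have := Nat.one_lt_pow (n := s + 1) (by omega) (show 1 < q by omega)
      omega
    · exact h
  have hX : 0 < q ^ s := by positivity
  -- the two parameters, without subtraction
  obtain ⟨l1, hl1'⟩ : ∃ l1, l1 + 2 * q ^ (s + 1) = q ^ (s + 3) * N + q ^ (s + 1) * N := by
    refine ⟨q ^ (s + 3) * N + q ^ (s + 1) * N - 2 * q ^ (s + 1), Nat.sub_add_cancel ?_⟩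
    have : q ^ (s + 3) * N = q ^ (s + 1) * (q ^ 2 * N) := by ring
    rw [this, ← mul_add, mul_comm 2]
    exact Nat.mul_le_mul_left _ (by nlinarith)
  obtain ⟨l0, hl0⟩ : ∃ l0, l0 + q ^ s = q * N * q ^ (s + 1) := by
    exact ⟨_, hc2 1⟩
  refine ⟨D', _, l1, 2 * l0, q ^ (s + 3) * N, hinv, hone, ?_, ?_, ?_, ?_, ?_, hrange, hdeg, ?_, ?_⟩
  · have := congrArg (Nat.cast : ℕ → ℚ) hc1
    push_cast at this ⊢
    rw [mul_div_assoc, hdiv]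
    linear_combination this
  · have h1 := congrArg (Nat.cast : ℕ → ℚ) hl1'
    push_cast at h1
    have h2 : 2 * ((q : ℚ) ^ (s + 1) - (q : ℚ) ^ 2) / ((q : ℚ) - 1) = 2 * (N - (q + 1)) := by
      rw [div_eq_iff hq0]
      linear_combination -2 * hNQ
    rw [h2]
    linear_combination h1 + (q : ℚ) ^ (s + 1) * (q + 1) * hNQ
  · have h1 := congrArg (Nat.cast : ℕ → ℚ) hl0
    push_cast at h1 ⊢
    have h2 : ((q : ℚ) ^ (s + 2 + 1) - (q : ℚ) ^ 2) / ((q : ℚ) - 1) = q ^ 2 * N := by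
      rw [div_eq_iff hq0]
      linear_combination -(q : ℚ) ^ 2 * hNQ
    rw [h2]
    linear_combination 2 * h1
  · push_cast
    rw [mul_div_assoc, hdiv]
  · rw [hcardG, ← hA, Nat.card_eq_fintype_card]
  · intro g h hgh
    split_ifs with hm
    · obtain ⟨c, hc, hcc⟩ := hl1 g h hgh hm
      rw [hcc]
      have h1 := hc3 c
      have h2 := hDD c hc
      omega
    · obtain ⟨c, hcc⟩ := hl2 g h hm
      rw [hcc]
      have h1 := hc2 c
      omega
  · intro hne heq
    apply hne
    obtain ⟨t, rfl⟩ : ∃ t, q = t + 1 := ⟨q - 1, by omega⟩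
    rw [Nat.add_sub_cancel] at hN
    have ht : 0 < t := by omega
    have h1 : (t + 1) ^ s * (2 * t) * ((t + 1) * N * t) = (t + 1) ^ s * (2 * t) * 2 := by
      zify at *
      linear_combination 2 * heq - 2 * hl1' + 4 * hl0
    have h2 := Nat.eq_of_mul_eq_mul_left (by positivity) h1
    have h3 : t = 1 := by
      by_contra h
      have : 2 ≤ t := by omega
      have : 1 ≤ N * t := Nat.mul_pos hN1 ht
      nlinarith
    subst h3
    have h4 : N = 1 := by omega
    subst h4
    refine ⟨rfl, ?_⟩
    rcases s with _ | s
    · rfl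
    · exfalso
      have : 0 < 2 ^ s := by positivity
      rw [pow_succ, pow_succ] at hN
      omega
end

section
/- Let r ≥ 3 and let A = (ZMod 4)^{r−1} × (ZMod 2). Then there exists a reversible identity-free subset D' of the generalized dihedral group G = Dih(A) such that the Cayley graph Cay(G, D') is a proper divisible design graph with parameters v = 2^{2r}, k = 2^{2r} − 2^r − 2^{r−1}, λ1 = 2^{2r} − 2^{r+1} − 2^{r−1}, λ2 = 2(2^r−1)(2^{r−1}−1), m = 2^{r+1}, n = 2^{r−1}. -/
open Classical

/-- Twisted product group on K × V, with cocycle given by the product. -/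
@[ext] structure TW {K V : Type} [CommRing K] [AddCommGroup V] (β : K →+ V) where
  x : K
  y : V

namespace TW
variable {K V : Type} [CommRing K] [AddCommGroup V] {β : K →+ V}

instance : Zero (TW β) := ⟨⟨0, 0⟩⟩
instance : Add (TW β) := ⟨fun a b => ⟨a.x + b.x, a.y + b.y + β (a.x * b.x)⟩⟩
instance : Neg (TW β) := ⟨fun a => ⟨-a.x, -a.y + β (a.x * a.x)⟩⟩
@[simp] lemma zero_x : (0 : TW β).x = 0 := rfl
@[simp] lemma zero_y : (0 : TW β).y = 0 := rfl
@[simp] lemma add_x (a b : TW β) : (a + b).x = a.x + b.x := rfl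
@[simp] lemma add_y (a b : TW β) : (a + b).y = a.y + b.y + β (a.x * b.x) := rfl
@[simp] lemma neg_x (a : TW β) : (-a).x = -a.x := rfl
@[simp] lemma neg_y (a : TW β) : (-a).y = -a.y + β (a.x * a.x) := rfl

instance : AddCommGroup (TW β) where
  add_assoc a b c := by
    ext
    · simp [add_assoc]
    · simp [add_mul, mul_add]; abel
  zero_add a := by ext <;> simp
  add_zero a := by ext <;> simp
  nsmul := nsmulRec
  zsmul := zsmulRec
  neg_add_cancel a := by ext <;> simp
  add_comm a b := by
    ext
    · simp [add_comm]
    · simp [mul_comm, add_comm]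

/-- first projection -/
def fst (β : K →+ V) : TW β →+ K where
  toFun a := a.x
  map_zero' := rfl
  map_add' _ _ := rfl

@[simp] lemma fst_apply (a : TW β) : fst β a = a.x := rfl

/-- underlying equivalence -/
def equivProd (β : K →+ V) : TW β ≃ K × V where
  toFun a := (a.x, a.y)
  invFun p := ⟨p.1, p.2⟩
  left_inv _ := rfl
  right_inv _ := rfl
end TW

/-- cyclic hom -/
def cycHom {W : Type} [AddCommGroup W] (n : ℕ) (w : W) (h : n • w = 0) : ZMod n →+ W :=
  ZMod.lift n ⟨zmultiplesHom W w, by simpa using h⟩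

lemma cycHom_apply {W : Type} [AddCommGroup W] (n : ℕ) [NeZero n] (w : W) (h : n • w = 0)
    (a : ZMod n) : cycHom n w h a = a.val • w := by
  have : a = ((a.val : ℤ) : ZMod n) := by simp
  conv_lhs => rw [this]
  unfold cycHom
  rw [ZMod.lift_coe]
  simp only [zmultiplesHom_apply, natCast_zsmul]

lemma zmod2_even : ∀ t : ZMod 2, 2 ∣ t.val → t = 0 := by decide
lemma zmod4_even : ∀ t : ZMod 4, 2 ∣ t.val → t + t = 0 := by decide

lemma exists_rds (s : ℕ) :
    ∃ (K : Type) (_ : AddCommGroup K) (_ : Fintype K)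
      (p : ((Fin s → ZMod 4) × ZMod 2) →+ K) (f : K → ((Fin s → ZMod 4) × ZMod 2)),
      Fintype.card K = 2 ^ (s + 1) ∧ (∀ x : K, x + x = 0) ∧ (∀ x, p (f x) = x) ∧
      (∀ a, p a ≠ 0 → Nat.card {y : K // f (y + p a) - f y = a} = 2) := by
  let K := GaloisField 2 (s + 1)
  have hcK : Nat.card K = 2 ^ (s + 1) := GaloisField.card 2 (s + 1) (by omega)
  let _ : Fintype K := Fintype.ofFinite K
  have h2 : ∀ x : K, x + x = 0 := fun x => CharTwo.add_self_eq_zero x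
  let S : Submodule (ZMod 2) K := Submodule.span (ZMod 2) {1}
  have hS : ∀ z : K, z ∈ S ↔ z = 0 ∨ z = 1 := by
    intro z
    rw [Submodule.mem_span_singleton]
    constructor
    · rintro ⟨a, rfl⟩
      fin_cases a
      · left; exact zero_smul _ _
      · right; exact one_smul _ _
    · rintro (rfl | rfl)
      · exact ⟨0, zero_smul _ _⟩
      · exact ⟨1, one_smul _ _⟩
  have hSr : Module.finrank (ZMod 2) S = 1 := finrank_span_singleton one_ne_zero
  have hKr : Module.finrank (ZMod 2) K = s + 1 := GaloisField.finrank 2 (by omega)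
  obtain ⟨Q, hQ⟩ := Submodule.exists_isCompl S
  have hQr : Module.finrank (ZMod 2) Q = s := by
    have := Submodule.finrank_add_eq_of_isCompl hQ
    omega
  let bas := Module.finBasisOfFinrankEq (ZMod 2) Q hQr
  let e : Fin s → K := fun i => (bas i : K)
  have hind : ∀ (n : Fin s → ℕ) (m : ℕ), ∑ i, n i • e i + m • (1 : K) = 0 →
      (∀ i, 2 ∣ n i) ∧ 2 ∣ m := by
    intro n m h
    have hq : ∑ i, n i • e i = ((∑ i, (n i : ZMod 2) • bas i : Q) : K) := by
      simp [e, Nat.cast_smul_eq_nsmul]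
    have hm : m • (1 : K) ∈ S := S.smul_of_tower_mem m (Submodule.mem_span_singleton_self 1)
    have hz : ∑ i, n i • e i = 0 := by
      have h1 : ∑ i, n i • e i ∈ Q := by rw [hq]; exact Subtype.property _
      have h3 : ∑ i, n i • e i ∈ S := by
        rw [eq_neg_of_add_eq_zero_left h]; exact S.neg_mem hm
      exact (Submodule.disjoint_def.1 hQ.disjoint) _ h3 h1
    constructor
    · rw [hq] at hz
      have := Submodule.coe_eq_zero.1 hz
      have := Fintype.linearIndependent_iff.1 bas.linearIndependent _ this
      intro i
      exact (ZMod.natCast_eq_zero_iff _ _).1 (this i)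
    · rw [hz, zero_add, nsmul_one] at h
      exact (CharP.cast_eq_zero_iff K 2 m).1 h
  let V := K ⧸ S
  let β : K →+ V := S.mkQ.toAddMonoidHom
  have hβ : ∀ z, β z = 0 ↔ z = 0 ∨ z = 1 := by
    intro z
    rw [← hS]
    exact Submodule.Quotient.mk_eq_zero S
  have hβs : Function.Surjective β := Submodule.mkQ_surjective S
  have hcV : Nat.card V = 2 ^ s := by
    have := Submodule.card_eq_card_quotient_mul_card S
    have h3 : Nat.card S = 2 := by
      rw [Module.natCard_eq_pow_finrank (K := ZMod 2), hSr]; simp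
    rw [hcK, h3, pow_succ] at this
    have h4 : Nat.card V = Nat.card (K ⧸ S) := rfl
    omega
  have hV2 : ∀ v : V, v + v = 0 := by
    intro v
    obtain ⟨z, rfl⟩ := hβs v
    rw [← map_add, h2, map_zero]
  have hW2 : ∀ w : TW β, w + w = ⟨0, β (w.x * w.x)⟩ := by
    intro w
    ext
    · simp [h2]
    · simp [hV2]
  have hW4 : ∀ w : TW β, 4 • w = 0 := by
    intro w
    have : 4 • w = (w + w) + (w + w) := by abel
    rw [this, hW2, hW2]
    ext <;> simp
  have h1W : 2 • (⟨1, 0⟩ : TW β) = 0 := by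
    rw [two_nsmul, hW2]
    ext
    · rfl
    · simpa using (hβ 1).2 (Or.inr rfl)
  let Φ : ((Fin s → ZMod 4) × ZMod 2) →+ TW β := AddMonoidHom.coprod
    (∑ i, (cycHom 4 (⟨e i, 0⟩ : TW β) (hW4 _)).comp (Pi.evalAddMonoidHom (fun _ => ZMod 4) i))
    (cycHom 2 ⟨1, 0⟩ h1W)
  have hΦ : ∀ a, (Φ a).x = ∑ i, (a.1 i).val • e i + a.2.val • (1 : K) := by
    intro a
    rw [← TW.fst_apply]
    simp only [Φ, AddMonoidHom.coprod_apply, map_add, AddMonoidHom.finsetSum_apply, map_sum,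
      AddMonoidHom.comp_apply, cycHom_apply, map_nsmul, TW.fst_apply, Pi.evalAddMonoidHom_apply]
  have hinj : Function.Injective Φ := by
    rw [injective_iff_map_eq_zero]
    rintro ⟨a, t⟩ h
    have hx := congrArg TW.x h
    rw [hΦ] at hx
    obtain ⟨ha, ht⟩ := hind _ _ hx
    have ht0 : t = 0 := by
      exact zmod2_even t ht
    subst ht0
    let c : Fin s → ZMod 4 := fun i => ((a i).val / 2 : ℕ)
    have hac : ((a, 0) : (Fin s → ZMod 4) × ZMod 2) = (c, 0) + (c, 0) := by
      ext i
      · have := ha i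
        simp only [c, Prod.mk_add_mk, Pi.add_apply]
        simp only at this
        revert this
        generalize a i = z
        clear * -
        revert z; decide
      · simp
    rw [hac, map_add, hW2] at h
    have hy := congrArg TW.y h
    simp only [TW.zero_y] at hy
    have hc : ∀ i, 2 ∣ (c i).val := by
      rcases (hβ _).1 hy with h0 | h0
      · have h0 := mul_self_eq_zero.1 h0
        rw [hΦ] at h0
        exact (hind _ _ h0).1
      · have h0 : (Φ (c, 0)).x = 1 := by
          have : ((Φ (c, 0)).x - 1) * ((Φ (c, 0)).x - 1) = 0 := by
            have := h2 (Φ (c, 0)).x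
            linear_combination h0 - this + h2 1
          exact sub_eq_zero.1 (mul_self_eq_zero.1 this)
        rw [hΦ] at h0
        refine (hind _ 1 (?_)).1
        simp only [ZMod.val_zero, zero_smul, add_zero] at h0
        rw [h0, one_smul]
        exact h2 1
    rw [hac]
    ext i
    · have := hc i
      simp only [Prod.mk_add_mk, Pi.add_apply, Prod.fst_zero, Pi.zero_apply]
      exact zmod4_even _ this
    · simp
  have : Finite V := Nat.finite_of_card_ne_zero (by rw [hcV]; positivity)
  have : Finite (TW β) := Finite.of_equiv _ (TW.equivProd β).symm
  have hbij : Function.Bijective Φ := by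
    rw [Nat.bijective_iff_injective_and_card]
    refine ⟨hinj, ?_⟩
    rw [Nat.card_congr (TW.equivProd β), Nat.card_prod, Nat.card_prod, hcK, hcV]
    simp [Nat.card_eq_fintype_card, ZMod.card]
    rw [show 4 = 2 * 2 from rfl, mul_pow, pow_succ]
    ring
  let Ψ := AddEquiv.ofBijective Φ hbij
  have hΨ : ∀ a, Ψ a = Φ a := fun a => rfl
  refine ⟨K, inferInstance, inferInstance, (TW.fst β).comp Φ, fun x => Ψ.symm ⟨x, 0⟩, ?_, h2, ?_, ?_⟩
  · rw [← Nat.card_eq_fintype_card, hcK]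
  · intro x
    simp only [AddMonoidHom.comp_apply, ← hΨ, AddEquiv.apply_symm_apply, TW.fst_apply]
  · intro a ha
    simp only [AddMonoidHom.comp_apply, TW.fst_apply] at ha ⊢
    obtain ⟨z, hz⟩ := hβs (Φ a).y
    have key : ∀ y : K, (Ψ.symm ⟨y + (Φ a).x, 0⟩ - Ψ.symm ⟨y, 0⟩ = a) ↔
        y = z / (Φ a).x ∨ y = (z + 1) / (Φ a).x := by
      intro y
      rw [← map_sub, AddEquiv.symm_apply_eq, hΨ, sub_eq_iff_eq_add, TW.ext_iff]
      simp only [TW.add_x, TW.add_y, add_zero]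
      rw [← hz, ← map_add, eq_comm (a := (0 : V)), hβ, eq_div_iff ha, eq_div_iff ha]
      have h11 := h2 1
      have hzz := h2 z
      constructor
      · rintro ⟨-, h | h⟩
        · left; linear_combination h - hzz
        · right; linear_combination h - hzz
      · rintro (h | h)
        · exact ⟨add_comm _ _, Or.inl (by linear_combination h + hzz)⟩
        · exact ⟨add_comm _ _, Or.inr (by linear_combination h + hzz)⟩
    rw [Nat.card_congr (Equiv.subtypeEquivRight key)]
    have : Nat.card {y : K // y = z / (Φ a).x ∨ y = (z + 1) / (Φ a).x} =
      Set.ncard {z / (Φ a).x, (z + 1) / (Φ a).x} := rfl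
    rw [this, Set.ncard_pair]
    intro h
    rw [div_left_inj' ha] at h
    simp at h

section counting
/-- number of elements satisfying `P` -/
noncomputable def cnt {α : Type} [Fintype α] (P : α → Prop) : ℕ := (Finset.univ.filter P).card

lemma cnt_eq {α : Type} [Fintype α] (P : α → Prop) [DecidablePred P] :
    cnt P = (Finset.univ.filter P).card := by
  unfold cnt; congr

lemma cnt_false {α : Type} [Fintype α] : cnt (fun _ : α => False) = 0 := by
  rw [cnt_eq]; simp

lemma cnt_compl {α : Type} [Fintype α] (P : α → Prop) :
    cnt P + cnt (fun x => ¬ P x) = Fintype.card α := by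
  rw [cnt_eq, cnt_eq, ← Finset.card_univ]
  exact Finset.card_filter_add_card_filter_not P

lemma cnt_or {α : Type} [Fintype α] (P Q : α → Prop) :
    cnt (fun x => P x ∨ Q x) + cnt (fun x => P x ∧ Q x) = cnt P + cnt Q := by
  simp only [cnt_eq]
  rw [Finset.filter_or, Finset.filter_and]
  exact Finset.card_union_add_card_inter _ _

variable {A K : Type} [AddCommGroup A] [AddCommGroup K] [Fintype A] [Fintype K]

/-- the non-adjacency relation on `A × Bool` -/
def Erel (p : A →+ K) (f : K → A) (x g : A × Bool) : Prop :=
  if x.2 = g.2 then p x.1 = p g.1 else f (p (x.1 + g.1)) = x.1 + g.1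

lemma Erel_symm (p : A →+ K) (f : K → A) (x g : A × Bool) : Erel p f x g ↔ Erel p f g x := by
  unfold Erel
  simp only [eq_comm (a := x.2), eq_comm (a := p x.1), add_comm x.1]

lemma Erel_refl (p : A →+ K) (f : K → A) (x : A × Bool) : Erel p f x x := by
  simp [Erel]

lemma card_filter_bool (P : A × Bool → Prop) (i : Bool) :
    cnt P = cnt (fun a => P (a, i)) +
      cnt (fun a => P (a, !i)) := by
  simp only [cnt_eq, Finset.card_filter]
  rw [Fintype.sum_prod_type_right, Fintype.sum_bool]
  cases i
  · rw [add_comm]; rfl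
  · rfl

lemma card_fiber (p : A →+ K) (f : K → A) (s : ℕ) (hA : Fintype.card A = 2 ^ (2 * s + 1))
    (hK : Fintype.card K = 2 ^ (s + 1)) (hpf : ∀ x, p (f x) = x) (k : K) :
    cnt (fun a => p a = k) = 2 ^ s := by
  have h1 : ∀ k', cnt (fun a => p a = k') =
      cnt (fun a => p a = k) := by
    intro k'
    simp only [cnt_eq]
    refine Finset.card_bij' (fun a _ => a + f k - f k') (fun a _ => a + f k' - f k) ?_ ?_ ?_ ?_
    · intro a ha; simp_all
    · intro a ha; simp_all
    · intro a ha; abel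
    · intro a ha; abel
  have h2 : Fintype.card A = ∑ k' : K, cnt (fun a => p a = k') := by
    rw [← Finset.card_univ]
    simp only [cnt_eq]
    exact Finset.card_eq_sum_card_fiberwise (fun _ _ => Finset.mem_coe.2 (Finset.mem_univ _))
  rw [Finset.sum_congr rfl (fun k' _ => h1 k'), Finset.sum_const, Finset.card_univ, hA, hK,
    smul_eq_mul] at h2
  have h3 : 2 ^ (s + 1) * 2 ^ s =
      2 ^ (s + 1) * cnt (fun a => p a = k) := by
    rw [← h2]; ring
  exact (Nat.eq_of_mul_eq_mul_left (by positivity) h3).symm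

lemma card_range (p : A →+ K) (f : K → A) (hpf : ∀ x, p (f x) = x) (a : A) :
    cnt (fun c => f (p (c + a)) = c + a) = Fintype.card K := by
  have : (Finset.univ.filter fun c => f (p (c + a)) = c + a) =
      Finset.univ.image (fun y => f y - a) := by
    ext c
    simp only [Finset.mem_filter, Finset.mem_univ, true_and, Finset.mem_image]
    constructor
    · intro h; exact ⟨p (c + a), by rw [h]; abel⟩
    · rintro ⟨y, rfl⟩; simp [hpf]
  rw [cnt_eq, this, Finset.card_image_of_injective, Finset.card_univ]
  intro y y' h
  have h := sub_left_injective h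
  rw [← hpf y, h, hpf]

lemma count_one (p : A →+ K) (f : K → A) (s : ℕ) (hA : Fintype.card A = 2 ^ (2 * s + 1))
    (hK : Fintype.card K = 2 ^ (s + 1)) (hpf : ∀ x, p (f x) = x) (g : A × Bool) :
    cnt (fun x => Erel p f x g) = 3 * 2 ^ s := by
  rw [card_filter_bool _ g.2]
  have h1 : ∀ c, Erel p f (c, g.2) g ↔ p c = p g.1 := by simp [Erel]
  have h2 : ∀ c, Erel p f (c, !g.2) g ↔ f (p (c + g.1)) = c + g.1 := by simp [Erel]
  simp only [h1, h2]
  rw [card_fiber p f s hA hK hpf, card_range p f hpf, hK]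
  ring

lemma count_two (p : A →+ K) (f : K → A) (s : ℕ) (hA : Fintype.card A = 2 ^ (2 * s + 1))
    (hK : Fintype.card K = 2 ^ (s + 1)) (hpf : ∀ x, p (f x) = x) (g h : A × Bool)
    (hgh : g ≠ h) (h12 : g.2 = h.2) (hp : p g.1 = p h.1) :
    cnt (fun x => Erel p f x g ∧ Erel p f x h) = 2 ^ s := by
  obtain ⟨a, i⟩ := g
  obtain ⟨a', i'⟩ := h
  simp only at h12 hp
  subst h12
  rw [card_filter_bool _ i]
  have h1 : ∀ c, (Erel p f (c, i) (a, i) ∧ Erel p f (c, i) (a', i)) ↔ p c = p a := by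
    simp [Erel, hp]
  have h2 : ∀ c, (Erel p f (c, !i) (a, i) ∧ Erel p f (c, !i) (a', i)) ↔ False := by
    intro c
    simp only [Erel, Bool.not_eq_self, if_false, iff_false, not_and]
    intro e1 e2
    apply hgh
    rw [map_add, hp, ← map_add, e2] at e1
    rw [add_left_cancel e1]
  simp only [h1, h2]
  rw [card_fiber p f s hA hK hpf, cnt_false, add_zero]

lemma count_three (p : A →+ K) (f : K → A) (hK2 : ∀ x : K, x + x = 0)
    (hpf : ∀ x, p (f x) = x)
    (hf : ∀ a, p a ≠ 0 → Nat.card {y : K // f (y + p a) - f y = a} = 2) (g h : A × Bool)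
    (hgh : ¬ (g.2 = h.2 ∧ p g.1 = p h.1)) :
    cnt (fun x => Erel p f x g ∧ Erel p f x h) = 2 := by
  obtain ⟨a, i⟩ := g
  obtain ⟨a', i'⟩ := h
  simp only at hgh
  rw [card_filter_bool _ i]
  by_cases hi : i = i'
  · subst hi
    have hp : p a ≠ p a' := fun h => hgh ⟨rfl, h⟩
    have h1 : ∀ c, (Erel p f (c, i) (a, i) ∧ Erel p f (c, i) (a', i)) ↔ False := by
      intro c
      simp only [Erel, if_true, iff_false, not_and]
      intro e1 e2
      exact hp (e1.symm.trans e2)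
    have h2 : ∀ c, (Erel p f (c, !i) (a, i) ∧ Erel p f (c, !i) (a', i)) ↔
        (f (p (c + a)) = c + a ∧ f (p (c + a')) = c + a') := by
      simp [Erel]
    simp only [h1, h2]
    have h3 := hf (a - a') (by rw [map_sub]; exact sub_ne_zero.2 hp)
    rw [Nat.card_eq_fintype_card, Fintype.card_subtype] at h3
    have h4 : (Finset.univ.filter fun c => f (p (c + a)) = c + a ∧ f (p (c + a')) = c + a') =
        (Finset.univ.filter fun y => f (y + p (a - a')) - f y = a - a').image
          (fun y => f y - a') := by
      ext c
      simp only [Finset.mem_filter, Finset.mem_univ, true_and, Finset.mem_image]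
      constructor
      · rintro ⟨e1, e2⟩
        refine ⟨p (c + a'), ?_, by rw [e2]; abel⟩
        rw [← map_add, show c + a' + (a - a') = c + a by abel, e1, e2]
        abel
      · rintro ⟨y, e, rfl⟩
        have e' : f y - a' + a = f (y + p (a - a')) := by
          rw [sub_eq_iff_eq_add.1 e]; abel
        refine ⟨?_, by simp [hpf]⟩
        rw [e', hpf]
    rw [cnt_false, cnt_eq, h4, Finset.card_image_of_injective, h3]
    · intro y y' h
      have h := sub_left_injective h
      rw [← hpf y, h, hpf]
  · obtain rfl : i' = !i := by cases i <;> cases i' <;> simp_all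
    have one : ∀ u v : A,
        cnt (fun c => p c = p u ∧ f (p (c + v)) = c + v) = 1 := by
      intro u v
      rw [cnt_eq, Finset.card_eq_one]
      refine ⟨f (p u + p v) - v, ?_⟩
      ext c
      simp only [Finset.mem_filter, Finset.mem_univ, true_and, Finset.mem_singleton]
      constructor
      · rintro ⟨e1, e2⟩
        rw [← e1, ← map_add, e2]; abel
      · rintro rfl
        simp [hpf]
    have h1 : ∀ c, (Erel p f (c, i) (a, i) ∧ Erel p f (c, i) (a', !i)) ↔
        (p c = p a ∧ f (p (c + a')) = c + a') := by
      simp [Erel]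
    have h2 : ∀ c, (Erel p f (c, !i) (a, i) ∧ Erel p f (c, !i) (a', !i)) ↔
        (p c = p a' ∧ f (p (c + a)) = c + a) := by
      simp [Erel, and_comm]
    simp only [h1, h2, one]

end counting

/-- for `r ≥ 3` and `A = (ZMod 4)^(r−1) × ZMod 2`, the generalized
dihedral group `G = Dih(A)` carries a reversible identity-free subset `D'` such
that `Cay(G, D')` is a proper divisible design graph with parameters
`v = 2^(2r)`, `k = 2^(2r) − 2^r − 2^(r−1)`, `λ1 = 2^(2r) − 2^(r+1) − 2^(r−1)`,
`λ2 = 2(2^r−1)(2^(r−1)−1)`, `m = 2^(r+1)`, `n = 2^(r−1)`. -/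
theorem dihedral_ddg_family_eq2
    (r : ℕ) (hr : 3 ≤ r)
    (G : Type*) [Group G] [Fintype G]
    (ι : Multiplicative ((Fin (r - 1) → ZMod 4) × ZMod 2) →* G)
    (hinj : Function.Injective ι)
    (b : G) (hb2 : b * b = 1) (hb1 : b ≠ 1)
    (hbconj : ∀ a, b * ι a * b⁻¹ = ι a⁻¹)
    (hbnot : b ∉ Set.range ι)
    (hcardG : Fintype.card G
        = 2 * Fintype.card (Multiplicative ((Fin (r - 1) → ZMod 4) × ZMod 2)))
    (hdecomp : ∀ g : G, (∃ a, g = ι a) ∨ (∃ a, g = ι a * b)) :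
    ∃ (D' : Set G) (C : G → Fin (2 ^ (r + 1))),
      D'⁻¹ = D' ∧
      (1 : G) ∉ D' ∧
      Fintype.card G = 2 ^ (2 * r) ∧
      (∀ j : Fin (2 ^ (r + 1)), Nat.card {g : G // C g = j} = 2 ^ (r - 1)) ∧
      (∀ g : G, Nat.card {x : G // x * g⁻¹ ∈ D'}
          = 2 ^ (2 * r) - 2 ^ r - 2 ^ (r - 1)) ∧
      (∀ g h : G, g ≠ h → C g = C h →
        Nat.card {x : G // x * g⁻¹ ∈ D' ∧ x * h⁻¹ ∈ D'}
          = 2 ^ (2 * r) - 2 ^ (r + 1) - 2 ^ (r - 1)) ∧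
      (∀ g h : G, C g ≠ C h →
        Nat.card {x : G // x * g⁻¹ ∈ D' ∧ x * h⁻¹ ∈ D'}
          = 2 * (2 ^ r - 1) * (2 ^ (r - 1) - 1)) ∧
      2 ^ (2 * r) - 2 ^ (r + 1) - 2 ^ (r - 1) ≠ 2 * (2 ^ r - 1) * (2 ^ (r - 1) - 1) ∧
      1 < 2 ^ (r + 1) ∧ 1 < 2 ^ (r - 1) := by
  obtain ⟨s, rfl⟩ : ∃ s, r = s + 1 := ⟨r - 1, by omega⟩
  simp only [Nat.add_sub_cancel] at *
  obtain ⟨K, _, _, p, f, hK, hK2, hpf, hf⟩ := exists_rds s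
  have hA : Fintype.card ((Fin s → ZMod 4) × ZMod 2) = 2 ^ (2 * s + 1) := by
    simp [ZMod.card]
    rw [show 4 = 2 ^ 2 from rfl, ← pow_mul, pow_succ]
  have hG : Fintype.card G = 2 ^ (2 * (s + 1)) := by
    rw [hcardG, Fintype.card_multiplicative, hA]; ring
  let F : ((Fin s → ZMod 4) × ZMod 2) × Bool → G :=
    fun x => ι (Multiplicative.ofAdd x.1) * (if x.2 then b else 1)
  have hbinv : b⁻¹ = b := inv_eq_of_mul_eq_one_left hb2
  have hFbij : Function.Bijective F := by
    constructor
    · rintro ⟨a, i⟩ ⟨c, j⟩ h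
      cases i <;> cases j <;> simp [F] at h
      · rw [Multiplicative.ofAdd.injective (hinj h)]
      · exact (hbnot ⟨(Multiplicative.ofAdd c)⁻¹ * Multiplicative.ofAdd a, by
          rw [map_mul, map_inv, h]; group⟩).elim
      · exact (hbnot ⟨(Multiplicative.ofAdd a)⁻¹ * Multiplicative.ofAdd c, by
          rw [map_mul, map_inv, ← h]; group⟩).elim
      · rw [Multiplicative.ofAdd.injective (hinj h)]
    · intro g
      rcases hdecomp g with ⟨a, rfl⟩ | ⟨a, rfl⟩
      · exact ⟨(a.toAdd, false), by simp [F]⟩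
      · exact ⟨(a.toAdd, true), by simp [F]⟩
  let e := (Equiv.ofBijective F hFbij).symm
  have heF : ∀ x, e (F x) = x := (Equiv.ofBijective F hFbij).symm_apply_apply
  have hFe : ∀ g, F (e g) = g := (Equiv.ofBijective F hFbij).apply_symm_apply
  have hbi : ∀ a, b * (ι a)⁻¹ = ι a * b := by
    intro a
    have := hbconj a⁻¹
    rw [inv_inv, map_inv] at this
    conv_rhs => rw [← this]
    group
  have hquot : ∀ x g, F x * (F g)⁻¹ =
      F (if x.2 = g.2 then x.1 - g.1 else x.1 + g.1, xor x.2 g.2) := by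
    rintro ⟨c, j⟩ ⟨a, i⟩
    cases i <;> cases j <;>
      simp [F, hbinv, mul_assoc, ofAdd_sub, ofAdd_add, div_eq_mul_inv, hbi]
    rw [← hbi, ← mul_assoc, hb2, one_mul]
  let D' : Set G := {g | ¬ Erel p f (e g) (0, false)}
  have hD : ∀ x g, x * g⁻¹ ∈ D' ↔ ¬ Erel p f (e x) (e g) := by
    intro x g
    show ¬ Erel p f (e (x * g⁻¹)) (0, false) ↔ _
    rw [not_iff_not]
    conv_lhs => rw [← hFe x, ← hFe g, hquot, heF]
    generalize e x = x
    generalize e g = g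
    obtain ⟨c, j⟩ := x
    obtain ⟨a, i⟩ := g
    cases i <;> cases j <;> simp [Erel, sub_eq_zero]
  have hcardB : Fintype.card (K × Bool) = 2 ^ (s + 1 + 1) := by
    rw [Fintype.card_prod, hK, Fintype.card_bool]; ring
  let ε : K × Bool ≃ Fin (2 ^ (s + 1 + 1)) := Fintype.equivFinOfCardEq hcardB
  let C : G → Fin (2 ^ (s + 1 + 1)) := fun g => ε (p (e g).1, (e g).2)
  have hC : ∀ g h, C g = C h ↔ ((e g).2 = (e h).2 ∧ p (e g).1 = p (e h).1) := by
    intro g h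
    simp only [C, EmbeddingLike.apply_eq_iff_eq, Prod.mk.injEq]
    exact and_comm
  have hcardAB : Fintype.card (((Fin s → ZMod 4) × ZMod 2) × Bool) = 2 ^ (2 * (s + 1)) := by
    rw [Fintype.card_prod, hA, Fintype.card_bool]; ring
  have htrans : ∀ P : ((Fin s → ZMod 4) × ZMod 2) × Bool → Prop,
      Nat.card {g : G // P (e g)} = cnt P := by
    intro P
    rw [Nat.card_congr (e.subtypeEquiv (q := P) (fun a => Iff.rfl)), Nat.card_eq_fintype_card,
      Fintype.card_subtype, cnt_eq]
  have hcompl : ∀ P : ((Fin s → ZMod 4) × ZMod 2) × Bool → Prop,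
      cnt P + cnt (fun x => ¬ P x) =
        2 ^ (2 * (s + 1)) := by
    intro P
    rw [← hcardAB]
    exact cnt_compl P
  have hone := count_one p f s hA hK hpf
  have hcommon : ∀ (g h : G) (l : ℕ),
      cnt (fun x => Erel p f x (e g) ∧ Erel p f x (e h)) = l →
      Nat.card {x : G // x * g⁻¹ ∈ D' ∧ x * h⁻¹ ∈ D'} + 6 * 2 ^ s = 2 ^ (2 * (s + 1)) + l := by
    intro g h l hl
    simp only [hD]
    rw [htrans (fun x => ¬ Erel p f x (e g) ∧ ¬ Erel p f x (e h))]
    have h1 := hcompl (fun x => Erel p f x (e g) ∨ Erel p f x (e h))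
    simp only [not_or] at h1
    have h2 := cnt_or (fun x => Erel p f x (e g)) (fun x => Erel p f x (e h))
    rw [hl, hone, hone] at h2
    omega
  have hX : 4 ≤ 2 ^ s := by
    calc 4 = 2 ^ 2 := rfl
      _ ≤ 2 ^ s := Nat.pow_le_pow_right (by norm_num) (by omega)
  have e1 : 2 ^ (2 * (s + 1)) = 4 * (2 ^ s * 2 ^ s) := by ring
  have e2 : 2 ^ (s + 1) = 2 * 2 ^ s := by ring
  have e3 : 2 ^ (s + 1 + 1) = 4 * 2 ^ s := by ring
  have e4 : 2 * (2 * 2 ^ s - 1) * (2 ^ s - 1) + 6 * 2 ^ s = 4 * (2 ^ s * 2 ^ s) + 2 := by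
    obtain ⟨Y, hY⟩ := Nat.exists_eq_add_of_le hX
    rw [hY, show 2 * (4 + Y) - 1 = 2 * Y + 7 by omega, show 4 + Y - 1 = Y + 3 by omega]
    ring
  have e5 : 4 * 2 ^ s ≤ 2 ^ s * 2 ^ s := Nat.mul_le_mul_right _ hX
  refine ⟨D', C, ?_, ?_, hG, ?_, ?_, ?_, ?_, ?_, ?_, ?_⟩
  · ext g
    rw [Set.mem_inv]
    have h1 := hD 1 g
    have h2 := hD g 1
    rw [one_mul] at h1
    rw [inv_one, mul_one] at h2
    rw [h1, h2, Erel_symm]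
  · have h1 := hD 1 1
    rw [inv_one, mul_one] at h1
    rw [h1, not_not]
    exact Erel_refl _ _ _
  · intro j
    obtain ⟨⟨k, i⟩, rfl⟩ := ε.surjective j
    simp only [C, EmbeddingLike.apply_eq_iff_eq, Prod.mk.injEq]
    rw [htrans (fun x => p x.1 = k ∧ x.2 = i), card_filter_bool _ i]
    simp [card_fiber p f s hA hK hpf, cnt_false]
  · intro g
    simp only [hD]
    rw [htrans (fun x => ¬ Erel p f x (e g))]
    have := hcompl (fun x => Erel p f x (e g))
    rw [hone] at this
    rw [e2]
    omega
  · intro g h hgh hc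
    have hc := (hC g h).1 hc
    have := hcommon g h _ (count_two p f s hA hK hpf (e g) (e h)
      (fun h' => hgh (e.injective h')) hc.1 hc.2)
    rw [e3]
    omega
  · intro g h hc
    have := hcommon g h _ (count_three p f hK2 hpf hf (e g) (e h)
      (fun h' => hc ((hC g h).2 h')))
    rw [e2]
    omega
  · rw [e1, e2, e3]
    omega
  · rw [e3]; omega
  · omega
end
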